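/- Let X(t), P(t) be differentiable curves of n×r real matrices satisfying for all t the Stiefel constraints XᵀX = I_r, XᵀP + PᵀX = 0 and the Neumann equations with parameter κ: Ẋ = P − (1+2κ)XPᵀX, Ṗ = −AX − XPᵀP + (1+2κ)PXᵀP + XXᵀAX. Then for every real λ and every natural number k, the function t ↦ tr((λ(P(t)X(t)ᵀ − X(t)P(t)ᵀ) + X(t)X(t)ᵀ − λ²A)ᵏ) is constant in t, i.e. its derivative vanishes identically. -/

import Mathlib

open Matrix

/-!
Write `Φ = PXᵀ - XPᵀ` and `S = XXᵀ`. The equations of motion give `Φ̇ = [S, A]` and, on the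
constraint set, `Ṡ = [Φ, S]`. Comparing powers of `λ`, these two equations say that
`L = λΦ + S - λ²A` satisfies the Lax equation `L̇ = [Φ - λA, L]`. Every power of `L` then satisfies
the same equation, and the trace of a commutator vanishes.
-/

section MatrixCalculus

variable {𝕜 l m n : Type*} [NontriviallyNormedField 𝕜]

theorem hasDerivAt_matrix [Finite m] [Finite n] {F : 𝕜 → Matrix m n 𝕜} {F' : Matrix m n 𝕜}
    {t : 𝕜} : HasDerivAt F F' t ↔ ∀ i j, HasDerivAt (fun s => F s i j) (F' i j) t := by
  have := Fintype.ofFinite m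
  have := Fintype.ofFinite n
  exact hasDerivAt_pi.trans (forall_congr' fun _ => hasDerivAt_pi)

theorem hasDerivAt_matrix_transpose [Finite m] [Finite n] {F : 𝕜 → Matrix m n 𝕜}
    {F' : Matrix m n 𝕜} {t : 𝕜} (hF : HasDerivAt F F' t) :
    HasDerivAt (fun s => (F s)ᵀ) F'ᵀ t :=
  hasDerivAt_matrix.2 fun i j => hasDerivAt_matrix.1 hF j i

theorem hasDerivAt_matrix_mul [Finite l] [Fintype m] [Finite n] {F : 𝕜 → Matrix l m 𝕜}
    {G : 𝕜 → Matrix m n 𝕜} {F' : Matrix l m 𝕜} {G' : Matrix m n 𝕜} {t : 𝕜}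
    (hF : HasDerivAt F F' t) (hG : HasDerivAt G G' t) :
    HasDerivAt (fun s => F s * G s) (F' * G t + F t * G') t := by
  rw [hasDerivAt_matrix] at hF hG ⊢
  intro i j
  simp only [Matrix.add_apply, Matrix.mul_apply, ← Finset.sum_add_distrib]
  exact HasDerivAt.fun_sum fun k _ => (hF i k).mul (hG k j)

theorem hasDerivAt_matrix_trace [Fintype n] {F : 𝕜 → Matrix n n 𝕜} {F' : Matrix n n 𝕜} {t : 𝕜}
    (hF : HasDerivAt F F' t) : HasDerivAt (fun s => trace (F s)) (trace F') t :=
  HasDerivAt.fun_sum fun i _ => hasDerivAt_matrix.1 hF i i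

end MatrixCalculus

section LaxEquation

variable {𝕜 : Type*} [NontriviallyNormedField 𝕜]

theorem hasDerivAt_pow_of_lax {𝔸 : Type*} [NormedRing 𝔸] [NormedAlgebra 𝕜 𝔸] {L : 𝕜 → 𝔸} {B : 𝔸}
    {t : 𝕜} (hL : HasDerivAt L ⁅B, L t⁆ t) (k : ℕ) :
    HasDerivAt (fun s => L s ^ k) ⁅B, L t ^ k⁆ t := by
  induction k with
  | zero => simpa only [pow_zero, Ring.lie_def, mul_one, one_mul, sub_self]
      using hasDerivAt_const t (1 : 𝔸)
  | succ k ih =>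
    have leibniz : ⁅B, L t ^ k⁆ * L t + L t ^ k * ⁅B, L t⁆ = ⁅B, L t ^ k * L t⁆ := by
      simp only [Ring.lie_def]
      noncomm_ring
    simp only [pow_succ]
    exact (ih.fun_mul hL).congr_deriv leibniz

theorem hasDerivAt_trace_pow_of_lax {n : Type*} [Fintype n] [DecidableEq n]
    {L : 𝕜 → Matrix n n 𝕜} {B : Matrix n n 𝕜} {t : 𝕜} (hL : HasDerivAt L ⁅B, L t⁆ t) (k : ℕ) :
    HasDerivAt (fun s => trace (L s ^ k)) 0 t := by
  -- Matrices carry no default norm; any submultiplicative one inducing the product topology works.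
  have hpow : HasDerivAt (fun s => L s ^ k) ⁅B, L t ^ k⁆ t :=
    open scoped Matrix.Norms.Operator in hasDerivAt_pow_of_lax hL k
  rw [← LieAlgebra.matrix_trace_commutator_zero n 𝕜 B (L t ^ k)]
  exact hasDerivAt_matrix_trace hpow

end LaxEquation

theorem lie_sub_smul_quadratic_pencil {R 𝔤 : Type*} [CommRing R] [LieRing 𝔤] [LieAlgebra R 𝔤]
    (A S Φ : 𝔤) (lam : R) :
    ⁅Φ - lam • A, lam • Φ + S - lam ^ 2 • A⁆ = lam • ⁅S, A⁆ + ⁅Φ, S⁆ := by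
  simp only [sub_lie, lie_sub, lie_add, smul_lie, lie_smul, lie_self]
  rw [← lie_skew A Φ, ← lie_skew A S]
  module

section NeumannField

variable {R n r : Type*} [CommRing R] [Fintype n] [Fintype r]

/-- The `X`-component of the Neumann vector field with parameter `κ` at the point `(X, P)`. -/
def neumannVelocity (κ : R) (X P : Matrix n r R) : Matrix n r R :=
  P - (1 + 2 * κ) • (X * Pᵀ * X)

/-- The `P`-component of the Neumann vector field with potential matrix `A` and parameter `κ` at
the point `(X, P)`. -/
def neumannForce (A : Matrix n n R) (κ : R) (X P : Matrix n r R) : Matrix n r R :=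
  -(A * X) - X * Pᵀ * P + (1 + 2 * κ) • (P * Xᵀ * P) + X * Xᵀ * A * X

/-- The angular momentum `Φ` at `(X, P)`: the moment map of the left action of the orthogonal
group. -/
def angularMomentum (X P : Matrix n r R) : Matrix n n R :=
  P * Xᵀ - X * Pᵀ

/-- The Lax matrix `L` of the Neumann system at `(X, P)`, with spectral parameter `λ = lam`. -/
def neumannLax (A : Matrix n n R) (lam : R) (X P : Matrix n r R) : Matrix n n R :=
  lam • angularMomentum X P + X * Xᵀ - lam ^ 2 • A

theorem lie_neumannLax (A : Matrix n n R) (lam : R) (X P : Matrix n r R) :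
    ⁅angularMomentum X P - lam • A, neumannLax A lam X P⁆ =
      lam • ⁅X * Xᵀ, A⁆ + ⁅angularMomentum X P, X * Xᵀ⁆ := by
  classical
  let := LieRing.ofAssociativeRing (A := Matrix n n R)
  exact lie_sub_smul_quadratic_pencil A (X * Xᵀ) (angularMomentum X P) lam

theorem angularMomentum_derivative_eq_lie {A : Matrix n n R} (hA : A.IsSymm) (κ : R)
    (X P : Matrix n r R) :
    (neumannForce A κ X P * Xᵀ + P * (neumannVelocity κ X P)ᵀ)
      - (neumannVelocity κ X P * Pᵀ + X * (neumannForce A κ X P)ᵀ) = ⁅X * Xᵀ, A⁆ := by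
  simp only [neumannForce, neumannVelocity, Ring.lie_def, transpose_add, transpose_sub,
    transpose_neg, transpose_smul, transpose_mul, transpose_transpose, hA.eq, Matrix.add_mul,
    Matrix.sub_mul, Matrix.neg_mul, Matrix.smul_mul, Matrix.mul_add, Matrix.mul_sub,
    Matrix.mul_neg, Matrix.mul_smul, Matrix.mul_assoc]
  abel

theorem projection_derivative_eq_lie [DecidableEq r] (κ : R) {X P : Matrix n r R}
    (hX : Xᵀ * X = 1) (hXP : Xᵀ * P + Pᵀ * X = 0) :
    neumannVelocity κ X P * Xᵀ + X * (neumannVelocity κ X P)ᵀ =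
      ⁅angularMomentum X P, X * Xᵀ⁆ := by
  have velocity_side : neumannVelocity κ X P * Xᵀ + X * (neumannVelocity κ X P)ᵀ =
      P * Xᵀ + X * Pᵀ - (1 + 2 * κ) • (X * (Xᵀ * P + Pᵀ * X) * Xᵀ) := by
    simp only [neumannVelocity, transpose_sub, transpose_smul, transpose_mul, transpose_transpose,
      Matrix.sub_mul, Matrix.mul_sub, Matrix.smul_mul, Matrix.mul_smul, Matrix.mul_add,
      Matrix.add_mul, Matrix.mul_assoc]
    module
  have commutator_side : ⁅angularMomentum X P, X * Xᵀ⁆ =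
      P * (Xᵀ * X) * Xᵀ + X * (Xᵀ * X) * Pᵀ - X * (Xᵀ * P + Pᵀ * X) * Xᵀ := by
    simp only [angularMomentum, Ring.lie_def, Matrix.sub_mul, Matrix.mul_sub, Matrix.mul_add,
      Matrix.add_mul, Matrix.mul_assoc]
    abel
  rw [velocity_side, commutator_side, hX, hXP]
  simp only [Matrix.mul_zero, Matrix.zero_mul, smul_zero, Matrix.mul_one]

end NeumannField

section NeumannFlow

variable {𝕜 n r : Type*} [NontriviallyNormedField 𝕜] [Fintype n] [Fintype r]
  {A : Matrix n n 𝕜} {κ : 𝕜} {X P : 𝕜 → Matrix n r 𝕜} {t : 𝕜}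

theorem hasDerivAt_angularMomentum (hA : A.IsSymm)
    (hX : HasDerivAt X (neumannVelocity κ (X t) (P t)) t)
    (hP : HasDerivAt P (neumannForce A κ (X t) (P t)) t) :
    HasDerivAt (fun s => angularMomentum (X s) (P s)) ⁅X t * (X t)ᵀ, A⁆ t := by
  rw [← angularMomentum_derivative_eq_lie hA κ]
  open scoped Matrix.Norms.Operator in
  exact (hasDerivAt_matrix_mul hP (hasDerivAt_matrix_transpose hX)).sub
    (hasDerivAt_matrix_mul hX (hasDerivAt_matrix_transpose hP))

theorem hasDerivAt_projection [DecidableEq r] (hXX : (X t)ᵀ * X t = 1)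
    (hXP : (X t)ᵀ * P t + (P t)ᵀ * X t = 0)
    (hX : HasDerivAt X (neumannVelocity κ (X t) (P t)) t) :
    HasDerivAt (fun s => X s * (X s)ᵀ) ⁅angularMomentum (X t) (P t), X t * (X t)ᵀ⁆ t := by
  rw [← projection_derivative_eq_lie κ hXX hXP]
  exact hasDerivAt_matrix_mul hX (hasDerivAt_matrix_transpose hX)

theorem hasDerivAt_neumannLax [DecidableEq r] (hA : A.IsSymm) (hXX : (X t)ᵀ * X t = 1)
    (hXP : (X t)ᵀ * P t + (P t)ᵀ * X t = 0)
    (hX : HasDerivAt X (neumannVelocity κ (X t) (P t)) t)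
    (hP : HasDerivAt P (neumannForce A κ (X t) (P t)) t) (lam : 𝕜) :
    HasDerivAt (fun s => neumannLax A lam (X s) (P s))
      ⁅angularMomentum (X t) (P t) - lam • A, neumannLax A lam (X t) (P t)⁆ t := by
  rw [lie_neumannLax]
  open scoped Matrix.Norms.Operator in
  exact (((hasDerivAt_angularMomentum hA hX hP).const_smul lam).add
    (hasDerivAt_projection hXX hXP hX)).sub_const (lam ^ 2 • A)

theorem neumann_trace_integrals_general [DecidableEq n] [DecidableEq r] (hA : A.IsSymm)
    (hXX : (X t)ᵀ * X t = 1) (hXP : (X t)ᵀ * P t + (P t)ᵀ * X t = 0)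
    (hX : HasDerivAt X (neumannVelocity κ (X t) (P t)) t)
    (hP : HasDerivAt P (neumannForce A κ (X t) (P t)) t) (lam : 𝕜) (k : ℕ) :
    HasDerivAt (fun s => trace (neumannLax A lam (X s) (P s) ^ k)) 0 t :=
  hasDerivAt_trace_pow_of_lax (hasDerivAt_neumannLax hA hXX hXP hX hP lam) k

end NeumannFlow

/-- Along the Neumann flow with parameter κ on the Stiefel variety,
the traces tr((λΦ + XXᵀ − λ²A)ᵏ) are first integrals: their time derivative vanishes. -/
theorem neumann_trace_integrals {n r : ℕ} (a : Fin n → ℝ)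
    (A : Matrix (Fin n) (Fin n) ℝ) (hA : A = Matrix.diagonal a)
    (κ : ℝ) (X P : ℝ → Matrix (Fin n) (Fin r) ℝ)
    (hc1 : ∀ t, (X t)ᵀ * X t = 1)
    (hc2 : ∀ t, (X t)ᵀ * P t + (P t)ᵀ * X t = 0)
    (hX : ∀ t i j, HasDerivAt (fun s => X s i j)
      ((P t - (1 + 2 * κ) • (X t * (P t)ᵀ * X t)) i j) t)
    (hP : ∀ t i j, HasDerivAt (fun s => P s i j)
      ((-(A * X t) - X t * (P t)ᵀ * P t + (1 + 2 * κ) • (P t * (X t)ᵀ * P t)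
        + X t * (X t)ᵀ * A * X t) i j) t) :
    ∀ (lam : ℝ) (k : ℕ) (t : ℝ),
      HasDerivAt (fun s => Matrix.trace
        ((lam • (P s * (X s)ᵀ - X s * (P s)ᵀ) + X s * (X s)ᵀ - lam ^ 2 • A) ^ k)) 0 t := by
  intro lam k t
  exact neumann_trace_integrals_general (hA ▸ isSymm_diagonal a) (hc1 t) (hc2 t)
    (hasDerivAt_matrix.2 (hX t)) (hasDerivAt_matrix.2 (hP t)) lam k
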